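/- arXiv:1606.05772 — 2 statements merged into one kernel-verified Lean document; each statement's English description precedes it below -/
import Mathlib

section
/- Let φ = (1+√5)/2, let ξ ∈ ℝ be fixed, and let A(x,y,z) = (5−√5)yz⁵ + (5+√5)y⁵z − 20y³z³ + (10+10√5)x²yz³ + (10−10√5)x²y³z − 10x⁴yz. Suppose p, q, r: I → ℝ are differentiable on an interval I and satisfy, for all t ∈ I: p′ = −A(p,q,r), q′ = −A(q,r,p), r′ = −A(r,p,q), p² + q² + r² = 1, and (φ²p² − q²)(φ²q² − r²)(φ²r² − p²) = ξ. Define f(X) = 7φX³ − 7φ²X² − (11ξ + 2φ³)X − 7ξφ, g(X) = X³ − 2φX² + φ²X − 4ξ, h(X) = 2X³ − φX² + ξ. Let P = φ²p² − q² and set X(t) = P(t), Y(t) = P′(t). Then for all t ∈ I: X·(Y²φ⁵ + 10·f(X)·g(X))² = 500·h(X)²·g(X)³. In other words, the pair (P, P′) parametrizes the algebraic curve X(Y²φ⁵ + 10f(X)g(X))² = 500h²(X)g³(X). -/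
/-- The golden ratio. -/
noncomputable def φ : ℝ := (1 + Real.sqrt 5) / 2

/-- The numerator of the first component of the icosahedral superflow's vector field. -/
noncomputable def A (x y z : ℝ) : ℝ :=
  (5 - Real.sqrt 5) * y * z ^ 5 + (5 + Real.sqrt 5) * y ^ 5 * z - 20 * y ^ 3 * z ^ 3
    + (10 + 10 * Real.sqrt 5) * x ^ 2 * y * z ^ 3 + (10 - 10 * Real.sqrt 5) * x ^ 2 * y ^ 3 * z
    - 10 * x ^ 4 * y * z

/-- `f_ξ(X) = 7φX³ − 7φ²X² − (11ξ + 2φ³)X − 7ξφ`. -/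
noncomputable def fpoly (ξ X : ℝ) : ℝ :=
  7 * φ * X ^ 3 - 7 * φ ^ 2 * X ^ 2 - (11 * ξ + 2 * φ ^ 3) * X - 7 * ξ * φ

/-- `g_ξ(X) = X³ − 2φX² + φ²X − 4ξ`. -/
noncomputable def gpoly (ξ X : ℝ) : ℝ :=
  X ^ 3 - 2 * φ * X ^ 2 + φ ^ 2 * X - 4 * ξ

/-- `h_ξ(X) = 2X³ − φX² + ξ`. -/
noncomputable def hpoly (ξ X : ℝ) : ℝ :=
  2 * X ^ 3 - φ * X ^ 2 + ξ

/-!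
Put `P = φ²p² − q²`, `Q = φ²q² − r²`, `R = φ²r² − p²`. On the unit sphere `P + Q + R = φ`, and
`PQR = ξ`, so `g(P) = P(Q − R)²`, `h(P) = P(P − Q)(P − R)` and `f(P) = −P·F` with `F` a symmetric
cubic in `P, Q, R`. The vector field satisfies `φP′ = 16√5·pqr·P(Q − R)`, hence
`φ⁵P′² = 1280φ³p²q²r²·P²(Q − R)²`. Inverting the cyclic linear system for `p², q², r²` shows that
`128φ³p²q²r²` is `F` plus `√5` times the Vandermonde product of `P, Q, R`. The symmetric part `F`
cancels in `φ⁵P′² + 10f(P)g(P)`, and squaring what is left gives the curve.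
-/

lemma phi_sq : φ ^ 2 = φ + 1 := Real.goldenRatio_sq

lemma sqrt_five_eq : √5 = 2 * φ - 1 := by
  rw [φ]
  ring

lemma phi_mul_three_sub_phi : φ * (3 - φ) = √5 := by
  rw [sqrt_five_eq]
  linear_combination -phi_sq

/-- The quadratic form `φ²x² − y²`. Its values on `(p, q)`, `(q, r)`, `(r, p)` are the factors
`P`, `Q`, `R` of the sextic first integral of the superflow. -/
noncomputable def goldenForm (x y : ℝ) : ℝ := φ ^ 2 * x ^ 2 - y ^ 2

lemma goldenForm_cyclic_sum (x y z : ℝ) :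
    goldenForm x y + goldenForm y z + goldenForm z x = φ * (x ^ 2 + y ^ 2 + z ^ 2) := by
  simp only [goldenForm]
  linear_combination (x ^ 2 + y ^ 2 + z ^ 2) * phi_sq

lemma phi_sq_mul_A_sub_mul_A (x y z : ℝ) :
    φ ^ 2 * (x * A x y z) - y * A y z x =
      -(8 * (3 - φ) * (x * y * z) * (goldenForm x y * (goldenForm y z - goldenForm z x))) := by
  have hφ := phi_sq
  simp only [A, goldenForm, sqrt_five_eq]
  grind

lemma hasDerivAt_goldenForm {p q : ℝ → ℝ} {r t : ℝ}
    (hp : HasDerivAt p (-(A (p t) (q t) r)) t) (hq : HasDerivAt q (-(A (q t) r (p t))) t) :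
    HasDerivAt (fun s => goldenForm (p s) (q s))
      (16 * (3 - φ) * (p t * q t * r) *
        (goldenForm (p t) (q t) * (goldenForm (q t) r - goldenForm r (p t)))) t := by
  refine (((hp.fun_pow 2).const_mul (φ ^ 2)).fun_sub (hq.fun_pow 2)).congr_deriv ?_
  push_cast
  linear_combination -2 * phi_sq_mul_A_sub_mul_A (p t) (q t) r

/-- The symmetric cubic `2e₁³ + 7e₁e₂ + 11e₃` in the elementary symmetric functions of `P, Q, R`,
the cofactor of `−P` in `f(P)`. -/
def symmCubic {S : Type*} [CommRing S] (P Q R : S) : S :=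
  2 * (P + Q + R) ^ 3 + 7 * (P + Q + R) * (P * Q + P * R + Q * R) + 11 * (P * Q * R)

lemma golden_mul_eq_symmCubic_add_vandermonde {S : Type*} [CommRing S] {w a b c P Q R : S}
    (hw : w ^ 2 = w + 1) (hP : P = w ^ 2 * a - b) (hQ : Q = w ^ 2 * b - c)
    (hR : R = w ^ 2 * c - a) :
    128 * w ^ 3 * (a * b * c) =
      symmCubic P Q R + (2 * w - 1) * ((P - Q) * (P - R) * (Q - R)) := by
  subst hP hQ hR
  rw [symmCubic]
  grind

lemma goldenForm_velocity_sq_mul_phi_pow_five (x y z : ℝ) {P Q R : ℝ} (hP : P = goldenForm x y)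
    (hQ : Q = goldenForm y z) (hR : R = goldenForm z x) :
    (16 * (3 - φ) * (x * y * z) * (P * (Q - R))) ^ 2 * φ ^ 5 = 10 * (P * (Q - R)) ^ 2 *
      (symmCubic P Q R + √5 * ((P - Q) * (P - R) * (Q - R))) := by
  have hfive : (φ * (3 - φ)) ^ 2 = 5 := by
    rw [phi_mul_three_sub_phi]
    exact Real.sq_sqrt (by norm_num)
  rw [sqrt_five_eq, ← golden_mul_eq_symmCubic_add_vandermonde phi_sq hP hQ hR]
  linear_combination 256 * φ ^ 3 * (x * y * z) ^ 2 * (P * (Q - R)) ^ 2 * hfive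

section Curve

variable {ξ P Q R : ℝ}

lemma gpoly_eq_of_sum_of_prod (hsum : P + Q + R = φ) (hprod : P * Q * R = ξ) :
    gpoly ξ P = P * (Q - R) ^ 2 := by
  rw [gpoly, ← hsum, ← hprod]
  ring

lemma hpoly_eq_of_sum_of_prod (hsum : P + Q + R = φ) (hprod : P * Q * R = ξ) :
    hpoly ξ P = P * (P - Q) * (P - R) := by
  rw [hpoly, ← hsum, ← hprod]
  ring

lemma fpoly_eq_of_sum_of_prod (hsum : P + Q + R = φ) (hprod : P * Q * R = ξ) :
    fpoly ξ P = -P * symmCubic P Q R := by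
  rw [fpoly, symmCubic, ← hsum, ← hprod]
  ring

lemma curve_eq_of_sum_of_prod {Y : ℝ} (hsum : P + Q + R = φ) (hprod : P * Q * R = ξ)
    (hY : Y ^ 2 * φ ^ 5 = 10 * (P * (Q - R)) ^ 2 *
      (symmCubic P Q R + √5 * ((P - Q) * (P - R) * (Q - R)))) :
    P * (Y ^ 2 * φ ^ 5 + 10 * fpoly ξ P * gpoly ξ P) ^ 2 =
      500 * hpoly ξ P ^ 2 * gpoly ξ P ^ 3 := by
  have hcancel : Y ^ 2 * φ ^ 5 + 10 * fpoly ξ P * gpoly ξ P =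
      10 * √5 * (P ^ 2 * (Q - R) ^ 3 * ((P - Q) * (P - R))) := by
    rw [hY, fpoly_eq_of_sum_of_prod hsum hprod, gpoly_eq_of_sum_of_prod hsum hprod]
    ring
  have hsqrt : √(5 : ℝ) ^ 2 = 5 := Real.sq_sqrt (by norm_num)
  rw [hcancel, hpoly_eq_of_sum_of_prod hsum hprod, gpoly_eq_of_sum_of_prod hsum hprod]
  linear_combination 100 * P ^ 5 * (Q - R) ^ 6 * ((P - Q) * (P - R)) ^ 2 * hsqrt

end Curve

theorem stmt12_general {ξ : ℝ} {p q : ℝ → ℝ} {r t : ℝ}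
    (hp : HasDerivAt p (-(A (p t) (q t) r)) t)
    (hq : HasDerivAt q (-(A (q t) r (p t))) t)
    (hsph : p t ^ 2 + q t ^ 2 + r ^ 2 = 1)
    (hxi : (φ ^ 2 * p t ^ 2 - q t ^ 2) * (φ ^ 2 * q t ^ 2 - r ^ 2)
        * (φ ^ 2 * r ^ 2 - p t ^ 2) = ξ) :
    let X := φ ^ 2 * p t ^ 2 - q t ^ 2
    let Y := deriv (fun s => φ ^ 2 * p s ^ 2 - q s ^ 2) t
    X * (Y ^ 2 * φ ^ 5 + 10 * fpoly ξ X * gpoly ξ X) ^ 2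
      = 500 * hpoly ξ X ^ 2 * gpoly ξ X ^ 3 := by
  intro X Y
  have hsum : X + goldenForm (q t) r + goldenForm r (p t) = φ :=
    (goldenForm_cyclic_sum (p t) (q t) r).trans (by rw [hsph, mul_one])
  have hY : Y = 16 * (3 - φ) * (p t * q t * r) *
      (X * (goldenForm (q t) r - goldenForm r (p t))) :=
    (hasDerivAt_goldenForm hp hq).deriv
  refine curve_eq_of_sum_of_prod hsum hxi ?_
  rw [hY]
  exact goldenForm_velocity_sq_mul_phi_pow_five (p t) (q t) r rfl rfl rfl

/-- Along a solution of the characteristic differential system of the icosahedral superflow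
with first integrals `1` and `ξ`, the pair `(P, P′)` with `P = φ²p² − q²` parametrizes the
algebraic curve `X(Y²φ⁵ + 10f(X)g(X))² = 500h²(X)g³(X)`. -/
theorem stmt12 (ξ : ℝ) (I : Set ℝ) (hI : I.OrdConnected) (p q r : ℝ → ℝ)
    (hp : ∀ t ∈ I, HasDerivAt p (-(A (p t) (q t) (r t))) t)
    (hq : ∀ t ∈ I, HasDerivAt q (-(A (q t) (r t) (p t))) t)
    (hr : ∀ t ∈ I, HasDerivAt r (-(A (r t) (p t) (q t))) t)
    (hsph : ∀ t ∈ I, (p t) ^ 2 + (q t) ^ 2 + (r t) ^ 2 = 1)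
    (hxi : ∀ t ∈ I, (φ ^ 2 * (p t) ^ 2 - (q t) ^ 2) * (φ ^ 2 * (q t) ^ 2 - (r t) ^ 2)
        * (φ ^ 2 * (r t) ^ 2 - (p t) ^ 2) = ξ) :
    ∀ t ∈ I,
      let X := φ ^ 2 * (p t) ^ 2 - (q t) ^ 2
      let Y := deriv (fun s => φ ^ 2 * (p s) ^ 2 - (q s) ^ 2) t
      X * (Y ^ 2 * φ ^ 5 + 10 * fpoly ξ X * gpoly ξ X) ^ 2
        = 500 * (hpoly ξ X) ^ 2 * (gpoly ξ X) ^ 3 :=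
  fun t ht => stmt12_general (hp t ht) (hq t ht) (hsph t ht) (hxi t ht)
end

section
/- Let φ = (1+√5)/2 and ξ ∈ ℝ. Define 𝔱(X) = 20X³ + 5φ²X² − 90φξX − 135ξ² − 20φ³ξ, g(X) = X³ − 2φX² + φ²X − 4ξ, and h(X) = 2X³ − φX² + ξ. Then for every real X ≠ 0: X⁹ · 4 · 𝔱((X³ − φX² − ξ)/X)³ = 500 · h(X)⁶ · g(X)³. -/
/-- `𝔱_ξ(X) = 20X³ + 5φ²X² − 90φξX − 135ξ² − 20φ³ξ`. -/
noncomputable def tpoly (ξ X : ℝ) : ℝ :=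
  20 * X ^ 3 + 5 * φ ^ 2 * X ^ 2 - 90 * φ * ξ * X - 135 * ξ ^ 2 - 20 * φ ^ 3 * ξ

/-!
A point `X ≠ 0` lies over `Y = Υ(X) = (X³ - φ X² - ξ) / X` exactly when it is a root of the cubic
`T³ - φ T² - Y T - ξ`, and `𝔱(Y)` is five times the discriminant of that cubic. Splitting off the
known root `X` writes the discriminant as the squared derivative at `X` times the discriminant of
the remaining quadratic. The derivative is `h(X) / X` and the quadratic discriminant is `g(X) / X`,
so `X³ 𝔱(Υ(X)) = 5 h(X)² g(X)`, of which four times the cube is the claim.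
-/

open Polynomial

section CommRing

variable {R : Type*} [CommRing R]

theorem eval_cubic_toPoly (P : Cubic R) (r : R) :
    P.toPoly.eval r = P.a * r ^ 3 + P.b * r ^ 2 + P.c * r + P.d := by
  simp [Cubic.toPoly]

theorem eval_derivative_cubic_toPoly (P : Cubic R) (r : R) :
    (derivative P.toPoly).eval r = 3 * P.a * r ^ 2 + 2 * P.b * r + P.c := by
  simp only [Cubic.toPoly, derivative_add, derivative_C_mul_X_pow, derivative_C_mul_X,
    derivative_C, eval_add, eval_mul, eval_pow, eval_X, eval_C, eval_zero]
  push_cast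
  ring

theorem discr_eq_of_isRoot {P : Cubic R} {r : R} (hr : P.toPoly.IsRoot r) :
    P.discr = (derivative P.toPoly).eval r ^ 2 *
      discrim P.a (P.b + P.a * r) (P.c + P.b * r + P.a * r ^ 2) := by
  have hd : P.d = -(P.a * r ^ 3 + P.b * r ^ 2 + P.c * r) := by
    rw [IsRoot.def, eval_cubic_toPoly] at hr
    exact eq_neg_of_add_eq_zero_right hr
  rw [eval_derivative_cubic_toPoly, Cubic.discr, discrim, hd]
  ring

/-- The cubic `T³ - a T² - Y T - ξ`, whose roots `X` are the solutions of
`X Y = X³ - a X² - ξ`. It encodes the fibre over `Y` of the reduction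
`Υ(X) = (X³ - a X² - ξ) / X` without division; the golden ratio is replaced by a parameter `a`. -/
def fiberCubic (a ξ Y : R) : Cubic R :=
  ⟨1, -a, -Y, -ξ⟩

theorem five_mul_discr_fiberCubic (a ξ Y : R) :
    5 * (fiberCubic a ξ Y).discr =
      20 * Y ^ 3 + 5 * a ^ 2 * Y ^ 2 - 90 * a * ξ * Y - 135 * ξ ^ 2 - 20 * a ^ 3 * ξ := by
  simp only [fiberCubic, Cubic.discr]
  ring

variable {a ξ X Y : R}

theorem isRoot_fiberCubic_iff :
    (fiberCubic a ξ Y).toPoly.IsRoot X ↔ X * Y = X ^ 3 - a * X ^ 2 - ξ := by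
  rw [IsRoot.def, eval_cubic_toPoly, fiberCubic]
  constructor <;> intro h <;> linear_combination -h

theorem mul_eval_derivative_fiberCubic (hY : X * Y = X ^ 3 - a * X ^ 2 - ξ) :
    X * (derivative (fiberCubic a ξ Y).toPoly).eval X = 2 * X ^ 3 - a * X ^ 2 + ξ := by
  rw [eval_derivative_cubic_toPoly, fiberCubic]
  linear_combination -hY

theorem mul_discrim_of_mul_eq (hY : X * Y = X ^ 3 - a * X ^ 2 - ξ) :
    X * discrim 1 (X - a) (X ^ 2 - a * X - Y) =
      X ^ 3 - 2 * a * X ^ 2 + a ^ 2 * X - 4 * ξ := by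
  rw [discrim]
  linear_combination 4 * hY

theorem pow_three_mul_discr_fiberCubic (hY : X * Y = X ^ 3 - a * X ^ 2 - ξ) :
    X ^ 3 * (fiberCubic a ξ Y).discr =
      (2 * X ^ 3 - a * X ^ 2 + ξ) ^ 2 * (X ^ 3 - 2 * a * X ^ 2 + a ^ 2 * X - 4 * ξ) := by
  have hdiscr : (fiberCubic a ξ Y).discr =
      (derivative (fiberCubic a ξ Y).toPoly).eval X ^ 2 *
        discrim 1 (X - a) (X ^ 2 - a * X - Y) := by
    rw [discr_eq_of_isRoot (isRoot_fiberCubic_iff.mpr hY)]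
    congr 2 <;> simp only [fiberCubic] <;> ring
  rw [hdiscr, ← mul_eval_derivative_fiberCubic hY, ← mul_discrim_of_mul_eq hY]
  ring

theorem stmt15_general (hY : X * Y = X ^ 3 - a * X ^ 2 - ξ) :
    X ^ 9 * 4 *
        (20 * Y ^ 3 + 5 * a ^ 2 * Y ^ 2 - 90 * a * ξ * Y - 135 * ξ ^ 2 - 20 * a ^ 3 * ξ) ^ 3 =
      500 * (2 * X ^ 3 - a * X ^ 2 + ξ) ^ 6 *
        (X ^ 3 - 2 * a * X ^ 2 + a ^ 2 * X - 4 * ξ) ^ 3 := by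
  rw [← five_mul_discr_fiberCubic]
  calc
    X ^ 9 * 4 * (5 * (fiberCubic a ξ Y).discr) ^ 3
    _ = 500 * (X ^ 3 * (fiberCubic a ξ Y).discr) ^ 3 := by ring
    _ = 500 * ((2 * X ^ 3 - a * X ^ 2 + ξ) ^ 2 *
          (X ^ 3 - 2 * a * X ^ 2 + a ^ 2 * X - 4 * ξ)) ^ 3 := by
      rw [pow_three_mul_discr_fiberCubic hY]
    _ = 500 * (2 * X ^ 3 - a * X ^ 2 + ξ) ^ 6 *
          (X ^ 3 - 2 * a * X ^ 2 + a ^ 2 * X - 4 * ξ) ^ 3 := by ring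

end CommRing

/-- `X⁹·4·𝔱((X³ − φX² − ξ)/X)³ = 500·h(X)⁶·g(X)³`. -/
theorem stmt15 (ξ : ℝ) (X : ℝ) (hX : X ≠ 0) :
    X ^ 9 * 4 * (tpoly ξ ((X ^ 3 - φ * X ^ 2 - ξ) / X)) ^ 3
      = 500 * (hpoly ξ X) ^ 6 * (gpoly ξ X) ^ 3 :=
  stmt15_general (mul_div_cancel₀ _ hX)
end
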